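/- Let h : E → F be a consonance of semilattices with zero. Then for every tight filter ξ on E, the set ȟ(ξ) = {f ∈ F : h(e) ≼ f for some e ∈ ξ} is a tight filter on F, and ȟ(ξ) = ĥ⁻¹(ξ), where ĥ is the dual map on tight filters (ĥ(η) = {e ∈ E : h(e) ∈ η}). Consequently ȟ is an order-homeomorphism from Ê_tight to F̂_tight. -/

import Mathlib

/-- A finite subset `C` is a cover for `f`: every `c ∈ C` satisfies `c ≤ f` and every
nonzero `g ≤ f` meets some `c ∈ C`. -/
def IsCover {E : Type*} [SemilatticeInf E] [OrderBot E] (C : Finset E) (f : E) : Prop :=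
  (∀ c ∈ C, c ≤ f) ∧ ∀ g : E, g ≠ ⊥ → g ≤ f → ∃ c ∈ C, g ⊓ c ≠ ⊥

/-- The (finite) family `{v i : i ∈ C}` is a cover for `f`. -/
def IsCoverFam {ι : Type*} {E : Type*} [SemilatticeInf E] [OrderBot E]
    (C : Finset ι) (v : ι → E) (f : E) : Prop :=
  (∀ i ∈ C, v i ≤ f) ∧ ∀ g : E, g ≠ ⊥ → g ≤ f → ∃ i ∈ C, g ⊓ v i ≠ ⊥

/-- A character on a semilattice with zero: a multiplicative `{0,1}`-valued map sending
`0` to `0` and not identically zero. -/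
def IsChar {E : Type*} [SemilatticeInf E] [OrderBot E] (φ : E → Bool) : Prop :=
  φ ⊥ = false ∧ (∀ e f : E, φ (e ⊓ f) = (φ e && φ f)) ∧ ∃ e : E, φ e = true

/-- A tight character: a character such that, for every `f` and every cover `C` for `f`,
`φ f = max_{c ∈ C} φ c`. -/
def IsTightChar {E : Type*} [SemilatticeInf E] [OrderBot E] (φ : E → Bool) : Prop :=
  IsChar φ ∧ ∀ f : E, ∀ C : Finset E, IsCover C f → (φ f = true ↔ ∃ c ∈ C, φ c = true)

/-- A filter on a semilattice with zero. -/
def IsFilterOn {E : Type*} [SemilatticeInf E] [OrderBot E] (ξ : Set E) : Prop :=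
  ξ.Nonempty ∧ ⊥ ∉ ξ ∧ (∀ e ∈ ξ, ∀ f ∈ ξ, e ⊓ f ∈ ξ) ∧ ∀ e ∈ ξ, ∀ f : E, e ≤ f → f ∈ ξ

/-- A tight filter: whenever `C` is a cover for some `f ∈ ξ`, some element of `C` lies in `ξ`. -/
def IsTightFilter {E : Type*} [SemilatticeInf E] [OrderBot E] (ξ : Set E) : Prop :=
  IsFilterOn ξ ∧ ∀ f ∈ ξ, ∀ C : Finset E, IsCover C f → ∃ c ∈ C, c ∈ ξ

/-- The tight order: `e` is tightly below `f` iff there is no nonzero `g ≤ e` with `g ⊓ f = ⊥`. -/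
def TightBelow {E : Type*} [SemilatticeInf E] [OrderBot E] (e f : E) : Prop :=
  ¬ ∃ g : E, g ≠ ⊥ ∧ g ≤ e ∧ g ⊓ f = ⊥

/-- Tight equivalence. -/
def TightEquiv {E : Type*} [SemilatticeInf E] [OrderBot E] (e f : E) : Prop :=
  TightBelow e f ∧ TightBelow f e

/-- A homomorphism is tightly injective if it reflects tight equivalence. -/
def TightlyInjective {E F : Type*} [SemilatticeInf E] [OrderBot E] [SemilatticeInf F] [OrderBot F]
    (h : E → F) : Prop :=
  ∀ e₁ e₂ : E, TightEquiv (h e₁) (h e₂) → TightEquiv e₁ e₂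

/-- A homomorphism is tightly surjective if its range is a large subset of the codomain:
for every `f` there is a finite `C ⊆ E` with `h e ≼ f` for all `e ∈ C` and
`{f ⊓ h e : e ∈ C}` a cover for `f`. -/
def TightlySurjective {E F : Type*} [SemilatticeInf E] [OrderBot E] [SemilatticeInf F] [OrderBot F]
    (h : E → F) : Prop :=
  ∀ f : F, ∃ C : Finset E, (∀ e ∈ C, TightBelow (h e) f) ∧ IsCoverFam C (fun e => f ⊓ h e) f

/-- A homomorphism of semilattices with zero is tight if it satisfies conditions
(4.1.ii) and (4.3.ii) of the paper. -/
def IsTightHom {E F : Type*} [SemilatticeInf E] [OrderBot E] [SemilatticeInf F] [OrderBot F]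
    (h : E → F) : Prop :=
  (∀ f : F, ∃ C : Finset E, IsCoverFam C (fun e => f ⊓ h e) f) ∧
  (∀ e : E, ∀ C : Finset E, IsCover C e → IsCoverFam C h (h e))

/-- The tight spectrum of a semilattice with zero, in the filter model: the set of all
tight filters, ordered by inclusion (the spectral order) and topologized via
characteristic functions as a subspace of the product `E → Bool` (`Bool` discrete). -/
structure TightFilters (E : Type*) [SemilatticeInf E] [OrderBot E] where
  carrier : Set E
  tight : IsTightFilter carrier

/-- The spectral order on tight filters: inclusion. -/
instance {E : Type*} [SemilatticeInf E] [OrderBot E] : PartialOrder (TightFilters E) :=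
  PartialOrder.lift TightFilters.carrier (fun a b h => by cases a; cases b; congr)

open Classical in
/-- The topology on tight filters, induced by characteristic functions from the product
topology on `E → Bool` (`Bool` discrete). -/
noncomputable instance {E : Type*} [SemilatticeInf E] [OrderBot E] :
    TopologicalSpace (TightFilters E) :=
  TopologicalSpace.induced
    (fun ξ : TightFilters E => (fun e => decide (e ∈ ξ.carrier) : E → Bool)) inferInstance

/-!
Say that a set `C` is an outer cover for `e` if no nonzero `g ≤ e` is disjoint from every member of
`C`. Singleton outer covers are the tight order, covers are the finite outer covers lying below `e`,
outer covers compose, and a tight filter meets every finite outer cover of each of its elements.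

Applied to `e` and `⊥`, tight injectivity says that only `⊥` is sent to `⊥`, and this already makes
`h` reflect outer covers. By tight surjectivity every `f` has a finite outer cover `h '' D` with
`h d ≼ f` for all `d ∈ D`; a tight filter `ξ` therefore satisfies `f ∈ ȟ ξ` iff `ξ` meets `D`, which
is what makes `ȟ` continuous. Composing such outer covers shows that `h` preserves outer covers and
that `ȟ ξ` is tight.
-/

section TightOrder

variable {E : Type*} [SemilatticeInf E] [OrderBot E] {d e f : E} {S T : Set E}

/-- An outer cover for `e`, i.e. a cover whose members need not lie below `e`. It extends the tight
order from elements to sets. It is stated contrapositively: only `⊥` lies below `e` and is disjoint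
from all of `S`. -/
def IsOuterCover (S : Set E) (e : E) : Prop :=
  ∀ g ≤ e, (∀ s ∈ S, Disjoint g s) → g = ⊥

theorem isOuterCover_singleton : IsOuterCover {f} e ↔ TightBelow e f := by
  simp only [IsOuterCover, TightBelow, Set.mem_singleton_iff, forall_eq, disjoint_iff]
  grind

theorem isOuterCover_of_mem (he : e ∈ S) : IsOuterCover S e :=
  fun _ hge hg => (hg e he).eq_bot_of_le hge

theorem IsOuterCover.anti (hS : IsOuterCover S e) (hde : d ≤ e) : IsOuterCover S d :=
  fun g hgd => hS g (hgd.trans hde)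

theorem IsOuterCover.mono (hS : IsOuterCover S e) (hST : S ⊆ T) : IsOuterCover T e :=
  fun g hge hg => hS g hge fun s hs => hg s (hST hs)

theorem IsOuterCover.trans (hS : IsOuterCover S e) (hT : ∀ s ∈ S, IsOuterCover T s) :
    IsOuterCover T e :=
  fun g hge hg => hS g hge fun s hs => disjoint_iff.2 <|
    hT s hs (g ⊓ s) inf_le_right fun t ht => (hg t ht).mono_left inf_le_left

theorem IsOuterCover.eq_bot (hS : IsOuterCover S e) (h : ∀ s ∈ S, Disjoint e s) : e = ⊥ :=
  hS e le_rfl h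

theorem isCover_iff {C : Finset E} :
    IsCover C e ↔ (∀ c ∈ C, c ≤ e) ∧ IsOuterCover (C : Set E) e := by
  simp only [IsCover, IsOuterCover, SetLike.mem_coe, disjoint_iff]
  grind

theorem IsCoverFam.isOuterCover_image {ι : Type*} {C : Finset ι} {v : ι → E}
    (hC : IsCoverFam C v e) : IsOuterCover (v '' C) e := by
  intro g hge hg
  by_contra hne
  obtain ⟨i, hi, hgi⟩ := hC.2 g hne hge
  exact hgi (hg _ (Set.mem_image_of_mem v hi)).eq_bot

theorem TightBelow.of_le (hef : e ≤ f) : TightBelow e f :=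
  isOuterCover_singleton.1 ((isOuterCover_of_mem (Set.mem_singleton f)).anti hef)

theorem TightBelow.isOuterCover (hef : TightBelow e f) (hS : IsOuterCover S f) :
    IsOuterCover S e :=
  (isOuterCover_singleton.2 hef).trans fun _ hs => hs ▸ hS

theorem TightBelow.trans (hde : TightBelow d e) (hef : TightBelow e f) : TightBelow d f :=
  isOuterCover_singleton.1 (hde.isOuterCover (isOuterCover_singleton.2 hef))

theorem TightBelow.eq_bot_of_disjoint (hef : TightBelow e f) (h : Disjoint e f) : e = ⊥ :=
  (isOuterCover_singleton.2 hef).eq_bot fun _ hs => hs ▸ h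

theorem TightBelow.inf {e' f' : E} (h : TightBelow e f) (h' : TightBelow e' f') :
    TightBelow (e ⊓ e') (f ⊓ f') := by
  rintro ⟨g, hne, hge, hg⟩
  refine h ⟨g, hne, hge.trans inf_le_left, ?_⟩
  by_contra hgf
  exact h' ⟨g ⊓ f, hgf, inf_le_left.trans (hge.trans inf_le_right), by rwa [inf_assoc]⟩

end TightOrder

section TightFilter

variable {E : Type*} [SemilatticeInf E] [OrderBot E] {ξ S : Set E} {e f : E}

theorem IsTightFilter.exists_mem_of_isOuterCover (hξ : IsTightFilter ξ) (he : e ∈ ξ)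
    (hfin : S.Finite) (hS : IsOuterCover S e) : ∃ s ∈ S, s ∈ ξ := by
  classical
  lift S to Finset E using hfin
  have hcover : IsCover (S.image (e ⊓ ·)) e := by
    refine isCover_iff.2 ⟨by simp, fun g hge hg => hS g hge fun s hs => ?_⟩
    have hges : Disjoint g (e ⊓ s) := hg _ (by simpa using ⟨s, hs, rfl⟩)
    rwa [disjoint_iff, ← inf_assoc, inf_eq_left.2 hge, ← disjoint_iff] at hges
  obtain ⟨c, hc, hcξ⟩ := hξ.2 e he _ hcover
  obtain ⟨s, hs, rfl⟩ := Finset.mem_image.1 hc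
  exact ⟨s, hs, hξ.1.2.2.2 _ hcξ s inf_le_right⟩

theorem IsTightFilter.mem_of_tightBelow (hξ : IsTightFilter ξ) (he : e ∈ ξ)
    (hef : TightBelow e f) : f ∈ ξ := by
  simpa using hξ.exists_mem_of_isOuterCover he (Set.finite_singleton f)
    (isOuterCover_singleton.2 hef)

end TightFilter

section Homomorphism

variable {E F : Type*} [SemilatticeInf E] [OrderBot E] [SemilatticeInf F] [OrderBot F]

theorem TightlyInjective.map_eq_bot_iff {h : E → F} (hi : TightlyInjective h) (h0 : h ⊥ = ⊥)
    (e : E) : h e = ⊥ ↔ e = ⊥ := by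
  refine ⟨fun he => ?_, fun he => he ▸ h0⟩
  have hequiv : TightEquiv (h e) (h ⊥) :=
    ⟨.of_le (he.trans h0.symm).le, .of_le (h0.trans he.symm).le⟩
  exact (hi e ⊥ hequiv).1.eq_bot_of_disjoint disjoint_bot_right

theorem TightlySurjective.exists_finite_isOuterCover {h : E → F} (hs : TightlySurjective h)
    (f : F) : ∃ D : Set E, D.Finite ∧ (∀ d ∈ D, TightBelow (h d) f) ∧ IsOuterCover (h '' D) f := by
  obtain ⟨D, hDf, hcover⟩ := hs f
  refine ⟨D, D.finite_toSet, hDf, hcover.isOuterCover_image.trans ?_⟩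
  rintro _ ⟨d, hd, rfl⟩
  exact (isOuterCover_of_mem (Set.mem_image_of_mem h hd)).anti inf_le_right

variable {h : InfHom E F} (hbot : ∀ e, h e = ⊥ ↔ e = ⊥)
include hbot

theorem disjoint_map_iff {a b : E} : Disjoint (h a) (h b) ↔ Disjoint a b := by
  rw [disjoint_iff, ← map_inf, hbot, disjoint_iff]

theorem IsOuterCover.of_map {S : Set E} {e : E} (H : IsOuterCover (h '' S) (h e)) :
    IsOuterCover S e :=
  fun g hge hg => (hbot g).1 <| H (h g) (OrderHomClass.mono h hge) <|
    Set.forall_mem_image.2 fun s hs => (disjoint_map_iff hbot).2 (hg s hs)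

theorem TightBelow.of_map {a b : E} (H : TightBelow (h a) (h b)) : TightBelow a b :=
  isOuterCover_singleton.1 <| .of_map hbot <| by
    rwa [Set.image_singleton, isOuterCover_singleton]

theorem IsOuterCover.map (hs : TightlySurjective h) {S : Set E} {e : E} (hS : IsOuterCover S e) :
    IsOuterCover (h '' S) (h e) := by
  intro g hge hg
  obtain ⟨D, -, hDg, hD⟩ := hs.exists_finite_isOuterCover g
  suffices hDbot : ∀ d ∈ D, d = ⊥ from
    hD.eq_bot <| Set.forall_mem_image.2 fun d hd =>
      (hbot d).2 (hDbot d hd) ▸ disjoint_bot_right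
  intro d hd
  have hde : TightBelow d e := .of_map hbot ((hDg d hd).trans (.of_le hge))
  refine (hde.isOuterCover hS).eq_bot fun s hsS => ?_
  have hdsg : TightBelow (h (d ⊓ s)) g :=
    .trans (.of_le (OrderHomClass.mono h inf_le_left)) (hDg d hd)
  have hdisj : Disjoint (h (d ⊓ s)) g :=
    (hg _ (Set.mem_image_of_mem h hsS)).symm.mono_left (OrderHomClass.mono h inf_le_right)
  exact disjoint_iff.2 ((hbot _).1 (hdsg.eq_bot_of_disjoint hdisj))

end Homomorphism

section CheckSet

variable {E F : Type*} [SemilatticeInf E] [OrderBot E] [SemilatticeInf F] [OrderBot F]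

/-- The set `ȟ ξ`. The dual map `ĥ`, which it inverts on tight filters, is written `h ⁻¹' η`. -/
def checkSet (h : E → F) (ξ : Set E) : Set F :=
  {f | ∃ e ∈ ξ, TightBelow (h e) f}

theorem checkSet_preimage {h : E → F} (hs : TightlySurjective h) {η : Set F}
    (hη : IsTightFilter η) : checkSet h (h ⁻¹' η) = η := by
  refine Set.Subset.antisymm (fun f ⟨e, he, hef⟩ => hη.mem_of_tightBelow he hef) fun f hf => ?_
  obtain ⟨D, hfin, hDf, hD⟩ := hs.exists_finite_isOuterCover f
  obtain ⟨_, ⟨d, hd, rfl⟩, hdη⟩ := hη.exists_mem_of_isOuterCover hf (hfin.image h) hD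
  exact ⟨d, hdη, hDf d hd⟩

theorem isFilterOn_checkSet {h : InfHom E F} (hbot : ∀ e, h e = ⊥ → e = ⊥) {ξ : Set E}
    (hξ : IsFilterOn ξ) : IsFilterOn (checkSet h ξ) := by
  obtain ⟨⟨e₀, he₀⟩, hbotξ, hinfξ, -⟩ := hξ
  refine ⟨⟨h e₀, e₀, he₀, .of_le le_rfl⟩, ?_, ?_, ?_⟩
  · rintro ⟨e, he, hle⟩
    have he_bot : e = ⊥ := hbot e (hle.eq_bot_of_disjoint disjoint_bot_right)
    exact hbotξ (he_bot ▸ he)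
  · rintro f ⟨e, he, hef⟩ f' ⟨e', he', hef'⟩
    exact ⟨e ⊓ e', hinfξ e he e' he', by rw [map_inf]; exact hef.inf hef'⟩
  · rintro f ⟨e, he, hef⟩ f' hff'
    exact ⟨e, he, hef.trans (.of_le hff')⟩

variable {h : InfHom E F} (hbot : ∀ e, h e = ⊥ ↔ e = ⊥)
include hbot

theorem preimage_checkSet {ξ : Set E} (hξ : IsTightFilter ξ) : h ⁻¹' checkSet h ξ = ξ :=
  Set.Subset.antisymm (fun _ ⟨_, he', hle⟩ => hξ.mem_of_tightBelow he' (.of_map hbot hle))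
    fun e he => ⟨e, he, .of_le le_rfl⟩

theorem checkSet_subset_checkSet_iff {ξ ζ : Set E} (hζ : IsTightFilter ζ) :
    checkSet h ξ ⊆ checkSet h ζ ↔ ξ ⊆ ζ := by
  refine ⟨fun hle e he => ?_, fun hle f ⟨e, he, hef⟩ => ⟨e, hle he, hef⟩⟩
  rw [← preimage_checkSet hbot hζ]
  exact hle ⟨e, he, .of_le le_rfl⟩

theorem mem_checkSet_iff {ξ : Set E} (hξ : IsTightFilter ξ) {f : F} {D : Set E} (hfin : D.Finite)
    (hDf : ∀ d ∈ D, TightBelow (h d) f) (hD : IsOuterCover (h '' D) f) :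
    f ∈ checkSet h ξ ↔ ∃ d ∈ D, d ∈ ξ :=
  ⟨fun ⟨_, he, hef⟩ => hξ.exists_mem_of_isOuterCover he hfin (.of_map hbot (hef.isOuterCover hD)),
    fun ⟨d, hd, hdξ⟩ => ⟨d, hdξ, hDf d hd⟩⟩

theorem isTightFilter_checkSet (hs : TightlySurjective h) {ξ : Set E} (hξ : IsTightFilter ξ) :
    IsTightFilter (checkSet h ξ) := by
  refine ⟨isFilterOn_checkSet (fun e => (hbot e).1) hξ.1, ?_⟩
  rintro f ⟨e, he, hef⟩ C hC
  choose D hfin hDf hD using hs.exists_finite_isOuterCover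
  have hcover : IsOuterCover (⋃ c ∈ C, D c) e := by
    refine .of_map hbot <| (hef.isOuterCover (isCover_iff.1 hC).2).trans fun c hc => ?_
    exact (hD c).mono (Set.image_mono (Set.subset_biUnion_of_mem (u := D) hc))
  obtain ⟨d, hd, hdξ⟩ := hξ.exists_mem_of_isOuterCover he
    (C.finite_toSet.biUnion fun c _ => hfin c) hcover
  obtain ⟨c, hc, hdc⟩ := Set.mem_iUnion₂.1 hd
  exact ⟨c, hc, d, hdξ, hDf c d hdc⟩

theorem isTightFilter_preimage (hs : TightlySurjective h) {η : Set F} (hη : IsTightFilter η) :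
    IsTightFilter (h ⁻¹' η) := by
  obtain ⟨⟨f, hf⟩, hbotη, hinfη, hupη⟩ := hη.1
  refine ⟨⟨?_, ?_, ?_, ?_⟩, ?_⟩
  · obtain ⟨e, he, -⟩ : f ∈ checkSet h (h ⁻¹' η) := (checkSet_preimage hs hη).symm ▸ hf
    exact ⟨e, he⟩
  · rwa [Set.mem_preimage, (hbot ⊥).2 rfl]
  · intro a ha b hb
    rw [Set.mem_preimage, map_inf]
    exact hinfη _ ha _ hb
  · exact fun a ha b hab => hupη _ ha _ (OrderHomClass.mono h hab)
  · intro e he C hC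
    simpa using hη.exists_mem_of_isOuterCover he (C.finite_toSet.image h)
      (.map hbot hs (isCover_iff.1 hC).2)

end CheckSet

attribute [ext] TightFilters

namespace TightFilters

variable {E F : Type*} [SemilatticeInf E] [OrderBot E] [SemilatticeInf F] [OrderBot F]

theorem continuous_iff_isClopen {X : Type*} [TopologicalSpace X] {m : X → TightFilters E} :
    Continuous m ↔ ∀ e, IsClopen {x | e ∈ (m x).carrier} := by
  rw [continuous_induced_rng, continuous_pi_iff]
  refine forall_congr' fun e => (continuous_bool_rng true).trans ?_
  simp [Set.preimage]

theorem isClopen_setOf_mem (e : E) : IsClopen {ξ : TightFilters E | e ∈ ξ.carrier} :=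
  continuous_iff_isClopen.1 continuous_id e

variable {h : InfHom E F} (hbot : ∀ e, h e = ⊥ ↔ e = ⊥) (hs : TightlySurjective h)

/-- The map `ȟ` as an order isomorphism of tight spectra, with inverse the dual map `ĥ`. -/
def checkOrderIso : TightFilters E ≃o TightFilters F where
  toFun ξ := ⟨checkSet h ξ.carrier, isTightFilter_checkSet hbot hs ξ.tight⟩
  invFun η := ⟨h ⁻¹' η.carrier, isTightFilter_preimage hbot hs η.tight⟩
  left_inv ξ := TightFilters.ext (preimage_checkSet hbot ξ.tight)
  right_inv η := TightFilters.ext (checkSet_preimage hs η.tight)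
  map_rel_iff' {_ ζ} := checkSet_subset_checkSet_iff hbot ζ.tight

theorem continuous_checkOrderIso : Continuous (checkOrderIso hbot hs) := by
  refine continuous_iff_isClopen.2 fun f => ?_
  obtain ⟨D, hfin, hDf, hD⟩ := hs.exists_finite_isOuterCover f
  have hunion : {ξ : TightFilters E | f ∈ (checkOrderIso hbot hs ξ).carrier} =
      ⋃ d ∈ D, {ξ | d ∈ ξ.carrier} := by
    ext ξ
    simp only [Set.mem_iUnion₂, Set.mem_ofPred_eq, exists_prop]
    exact mem_checkSet_iff hbot ξ.tight hfin hDf hD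
  rw [hunion]
  exact hfin.isClopen_biUnion fun d _ => isClopen_setOf_mem d

theorem continuous_checkOrderIso_symm : Continuous (checkOrderIso hbot hs).symm :=
  continuous_iff_isClopen.2 fun e => isClopen_setOf_mem (h e)

theorem isHomeomorph_checkOrderIso : IsHomeomorph (checkOrderIso hbot hs) :=
  Homeomorph.isHomeomorph
    { (checkOrderIso hbot hs).toEquiv with
      continuous_toFun := continuous_checkOrderIso hbot hs
      continuous_invFun := continuous_checkOrderIso_symm hbot hs }

end TightFilters

/-- Let `h : E → F` be a consonance of semilattices with zero. Then for
every tight filter `ξ` on `E`, the set `ȟ ξ = {f : F | ∃ e ∈ ξ, h e ≼ f}` is a tight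
filter on `F`; moreover `ȟ ξ = ĥ⁻¹ ξ`, i.e. for every tight filter `η` on `F`,
`ĥ η = ξ` iff `η = ȟ ξ` (where `ĥ η = {e : E | h e ∈ η}` is the dual map).
Consequently `ȟ` is an order-homeomorphism from `Ê_tight` to `F̂_tight`. -/
theorem check_map_of_consonance {E F : Type*} [SemilatticeInf E] [OrderBot E]
    [SemilatticeInf F] [OrderBot F]
    (h : E → F) (h0 : h ⊥ = ⊥) (hinf : ∀ a b : E, h (a ⊓ b) = h a ⊓ h b)
    (hi : TightlyInjective h) (hs : TightlySurjective h) :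
    (∀ ξ : Set E, IsTightFilter ξ →
      IsTightFilter {f : F | ∃ e ∈ ξ, TightBelow (h e) f}) ∧
    (∀ ξ : Set E, IsTightFilter ξ → ∀ η : Set F, IsTightFilter η →
      ({e : E | h e ∈ η} = ξ ↔ η = {f : F | ∃ e ∈ ξ, TightBelow (h e) f})) ∧
    (∃ hmap : ∀ ξ : TightFilters E,
        IsTightFilter {f : F | ∃ e ∈ ξ.carrier, TightBelow (h e) f},
      IsHomeomorph (fun ξ : TightFilters E =>
        (⟨{f : F | ∃ e ∈ ξ.carrier, TightBelow (h e) f}, hmap ξ⟩ : TightFilters F)) ∧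
      ∀ ξ₁ ξ₂ : TightFilters E, ξ₁ ≤ ξ₂ ↔
        (⟨{f : F | ∃ e ∈ ξ₁.carrier, TightBelow (h e) f}, hmap ξ₁⟩ : TightFilters F) ≤
          ⟨{f : F | ∃ e ∈ ξ₂.carrier, TightBelow (h e) f}, hmap ξ₂⟩) := by
  let k : InfHom E F := ⟨h, hinf⟩
  have hbot : ∀ e, k e = ⊥ ↔ e = ⊥ := hi.map_eq_bot_iff h0
  have hk : TightlySurjective k := hs
  refine ⟨fun ξ hξ => isTightFilter_checkSet hbot hk hξ, fun ξ hξ η hη => ⟨?_, ?_⟩,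
    fun ξ => isTightFilter_checkSet hbot hk ξ.tight,
    TightFilters.isHomeomorph_checkOrderIso hbot hk,
    fun ξ₁ ξ₂ => (TightFilters.checkOrderIso hbot hk).le_iff_le.symm⟩
  · rintro rfl
    exact (checkSet_preimage hs hη).symm
  · rintro rfl
    exact preimage_checkSet hbot hξ
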